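/- arXiv:2205.05428 — 5 statements merged into one kernel-verified Lean document; each statement's English description precedes it below -/
import Mathlib

section
/- The level set Ω_θ = {(w,b,v,u) ∈ Ω₂ : O(w,v,u) ≤ θ} is a bounded subset of the (finite-dimensional) variable space. -/
/-! The level set is contained in a box. On the feasible cone every penalty gap
`v - lrelu α u` is nonnegative, so all terms of the objective are nonnegative and each is at most
`θ` (`bounds_of_mem`). The group regularizer then bounds `W` (`abs_weight_le`), and `λ_v ‖v‖²`
bounds the hidden and output states (`sq_state_le`), the input states being the data. No
regularizer acts on `u`: it is bounded above by the cone constraint `u ≤ v`, and below because the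
penalty keeps `lrelu α u` within `θ / β` of `v` and the leaky ReLU has positive slope `α` on the
negative axis (`neg_div_le_of_neg_le_lrelu`). Finally `b = u_n - W v_n` for any one sample `n`,
which exists as `N ≥ 1`. -/

open Finset Filter Topology

noncomputable section

/-- Leaky ReLU activation with slope `α`. -/
def lrelu (α t : ℝ) : ℝ := max t (α * t)

/-- Weight variables: `W ℓ` here is `W_{ℓ+1}` of the paper (layers `1,…,L`, `L = M+1`). -/
abbrev Wt (M : ℕ) (Nd : ℕ → ℕ) : Type :=
  (ℓ : Fin (M + 1)) → Fin (Nd (ℓ.1 + 1)) → Fin (Nd ℓ.1) → ℝ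

/-- Bias variables. -/
abbrev Bs (M : ℕ) (Nd : ℕ → ℕ) : Type :=
  (ℓ : Fin (M + 1)) → Fin (Nd (ℓ.1 + 1)) → ℝ

/-- Auxiliary `v` variables (`v_{n,ℓ}`, `ℓ = 0,…,L`). -/
abbrev Vs (M N : ℕ) (Nd : ℕ → ℕ) : Type :=
  Fin N → (ℓ : Fin (M + 2)) → Fin (Nd ℓ.1) → ℝ

/-- Auxiliary `u` variables (`u n ℓ` is `u_{n,ℓ+1}` of the paper). -/
abbrev Us (M N : ℕ) (Nd : ℕ → ℕ) : Type :=
  Fin N → (ℓ : Fin (M + 1)) → Fin (Nd (ℓ.1 + 1)) → ℝ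

/-- A full point `(w, b, v, u)` of the variable space. -/
abbrev Pt (M N : ℕ) (Nd : ℕ → ℕ) : Type :=
  Wt M Nd × Bs M Nd × Vs M N Nd × Us M N Nd

variable {M N : ℕ} {Nd : ℕ → ℕ}

/-- Group sparse regularizer `R₁` (sum of Euclidean norms of the columns). -/
def R1 (lw : ℝ) (W : Wt M Nd) : ℝ :=
  lw * ∑ ℓ : Fin (M + 1), ∑ j : Fin (Nd ℓ.1),
    Real.sqrt (∑ i : Fin (Nd (ℓ.1 + 1)), (W ℓ i j) ^ 2)

/-- Regularizer `R₂ = λ_v ‖v‖²`. -/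
def R2 (lv : ℝ) (v : Vs M N Nd) : ℝ :=
  lv * ∑ n : Fin N, ∑ ℓ : Fin (M + 1), ∑ i : Fin (Nd (ℓ.1 + 1)), (v n ℓ.succ i) ^ 2

/-- Objective `Ō` of problem (P). -/
def Obar (lw lv : ℝ) (y : Fin N → Fin (Nd (M + 1)) → ℝ) (z : Pt M N Nd) : ℝ :=
  (1 / (N : ℝ)) * ∑ n : Fin N, ∑ i : Fin (Nd (M + 1)),
      (z.2.2.1 n (Fin.last (M + 1)) i - y n i) ^ 2
    + R1 lw z.1 + R2 lv z.2.2.1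

/-- Penalized objective `O` of problem (PP). -/
def Opp (α β lw lv : ℝ) (y : Fin N → Fin (Nd (M + 1)) → ℝ) (z : Pt M N Nd) : ℝ :=
  Obar lw lv y z
    + β * ∑ n : Fin N, ∑ ℓ : Fin (M + 1), ∑ i : Fin (Nd (ℓ.1 + 1)),
        (z.2.2.1 n ℓ.succ i - lrelu α (z.2.2.2 n ℓ i))

/-- Input convention `v_{n,0} = x_n`. -/
def inputEq (x : Fin N → Fin (Nd 0) → ℝ) (z : Pt M N Nd) : Prop :=
  ∀ n : Fin N, z.2.2.1 n ⟨0, Nat.succ_pos _⟩ = x n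

/-- Linear constraints `u_{n,ℓ} = W_ℓ v_{n,ℓ-1} + b_ℓ`. -/
def linEq (z : Pt M N Nd) : Prop :=
  ∀ (n : Fin N) (ℓ : Fin (M + 1)) (i : Fin (Nd (ℓ.1 + 1))),
    z.2.2.2 n ℓ i = (∑ j : Fin (Nd ℓ.1), z.1 ℓ i j * z.2.2.1 n ℓ.castSucc j) + z.2.1 ℓ i

/-- Cone constraints `v ≥ u`, `v ≥ α u` (componentwise). -/
def inCone (α : ℝ) (z : Pt M N Nd) : Prop :=
  ∀ (n : Fin N) (ℓ : Fin (M + 1)) (i : Fin (Nd (ℓ.1 + 1))),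
    z.2.2.2 n ℓ i ≤ z.2.2.1 n ℓ.succ i ∧ α * z.2.2.2 n ℓ i ≤ z.2.2.1 n ℓ.succ i

/-- Feasible set `Ω₂` of problem (PP). -/
def feas2 (α : ℝ) (x : Fin N → Fin (Nd 0) → ℝ) (z : Pt M N Nd) : Prop :=
  inputEq x z ∧ linEq z ∧ inCone α z

/-- Feasible set `Ω₁` of problem (P). -/
def feas1 (α : ℝ) (x : Fin N → Fin (Nd 0) → ℝ) (z : Pt M N Nd) : Prop :=
  inputEq x z ∧ linEq z ∧
    ∀ (n : Fin N) (ℓ : Fin (M + 1)) (i : Fin (Nd (ℓ.1 + 1))),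
      z.2.2.1 n ℓ.succ i = lrelu α (z.2.2.2 n ℓ i)

/-- Euclidean (ℓ²) distance on the variable space. -/
def l2dist (z z' : Pt M N Nd) : ℝ :=
  Real.sqrt
    ((∑ ℓ : Fin (M + 1), ∑ i : Fin (Nd (ℓ.1 + 1)), ∑ j : Fin (Nd ℓ.1),
        (z.1 ℓ i j - z'.1 ℓ i j) ^ 2)
      + (∑ ℓ : Fin (M + 1), ∑ i : Fin (Nd (ℓ.1 + 1)), (z.2.1 ℓ i - z'.2.1 ℓ i) ^ 2)
      + (∑ n : Fin N, ∑ ℓ : Fin (M + 2), ∑ i : Fin (Nd ℓ.1),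
          (z.2.2.1 n ℓ i - z'.2.2.1 n ℓ i) ^ 2)
      + (∑ n : Fin N, ∑ ℓ : Fin (M + 1), ∑ i : Fin (Nd (ℓ.1 + 1)),
          (z.2.2.2 n ℓ i - z'.2.2.2 n ℓ i) ^ 2))

/-- `θ_w = (θ/λ_w)·√(N_{L+2} + N₀)`. -/
def thw (M : ℕ) (Nd : ℕ → ℕ) (θ lw : ℝ) : ℝ :=
  (θ / lw) * Real.sqrt ((∑ ℓ : Fin (M + 1), (Nd (ℓ.1 + 1) : ℝ)) + (Nd 0 : ℝ))

/-- `θ_v = √(θ/λ_v)`. -/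
def thv (θ lv : ℝ) : ℝ := Real.sqrt (θ / lv)

/-- The level set `Ω_θ`. -/
def levelSet (α β lw lv θ : ℝ) (x : Fin N → Fin (Nd 0) → ℝ)
    (y : Fin N → Fin (Nd (M + 1)) → ℝ) : Set (Pt M N Nd) :=
  {z | feas2 α x z ∧ Opp α β lw lv y z ≤ θ}

/-- Residual of the linear constraint. -/
def resid (z : Pt M N Nd) (n : Fin N) (ℓ : Fin (M + 1)) (i : Fin (Nd (ℓ.1 + 1))) : ℝ :=
  z.2.2.2 n ℓ i - ((∑ j : Fin (Nd ℓ.1), z.1 ℓ i j * z.2.2.1 n ℓ.castSucc j) + z.2.1 ℓ i)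

/-- Augmented Lagrangian `L_ρ(w,b,v,u;ξ)`. -/
def ALag (α β lw lv : ℝ) (y : Fin N → Fin (Nd (M + 1)) → ℝ) (ρ : ℝ) (ξ : Us M N Nd)
    (z : Pt M N Nd) : ℝ :=
  Opp α β lw lv y z
    + ∑ n : Fin N, ∑ ℓ : Fin (M + 1), ∑ i : Fin (Nd (ℓ.1 + 1)), ξ n ℓ i * resid z n ℓ i
    + (ρ / 2) * ∑ n : Fin N, ∑ ℓ : Fin (M + 1), ∑ i : Fin (Nd (ℓ.1 + 1)), (resid z n ℓ i) ^ 2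

/-- A term of a triple (dependent) sum of nonnegative reals is at most the sum. -/
lemma term_le_sum_three {ι : Type*} [Fintype ι] {κ : ι → Type*} [∀ a, Fintype (κ a)]
    {τ : ∀ a, κ a → Type*} [∀ a b, Fintype (τ a b)] (f : ∀ a b, τ a b → ℝ)
    (hf : ∀ a b c, 0 ≤ f a b c) (a : ι) (b : κ a) (c : τ a b) :
    f a b c ≤ ∑ a, ∑ b, ∑ c, f a b c :=
  calc f a b c ≤ ∑ c, f a b c :=
        Finset.single_le_sum (fun c _ => hf a b c) (Finset.mem_univ c)
    _ ≤ ∑ b, ∑ c, f a b c :=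
        Finset.single_le_sum (f := fun b => ∑ c, f a b c)
          (fun b _ => Finset.sum_nonneg fun c _ => hf a b c) (Finset.mem_univ b)
    _ ≤ ∑ a, ∑ b, ∑ c, f a b c :=
        Finset.single_le_sum (f := fun a => ∑ b, ∑ c, f a b c)
          (fun a _ => Finset.sum_nonneg fun b _ => Finset.sum_nonneg fun c _ => hf a b c)
          (Finset.mem_univ a)

/-- Each entry of `W` is controlled by the Euclidean norm of its column, hence by `R1`. -/
lemma abs_weight_le {lw θ : ℝ} (hlw : 0 < lw) {W : Wt M Nd} (h : R1 lw W ≤ θ)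
    (ℓ : Fin (M + 1)) (i : Fin (Nd (ℓ.1 + 1))) (j : Fin (Nd ℓ.1)) : |W ℓ i j| ≤ θ / lw := by
  rw [le_div_iff₀' hlw]
  refine le_trans (mul_le_mul_of_nonneg_left ?_ hlw.le) h
  calc |W ℓ i j| ≤ Real.sqrt (∑ i, (W ℓ i j) ^ 2) :=
        Real.abs_le_sqrt (Finset.single_le_sum (f := fun i => (W ℓ i j) ^ 2)
          (fun i _ => sq_nonneg _) (Finset.mem_univ i))
    _ ≤ ∑ j, Real.sqrt (∑ i, (W ℓ i j) ^ 2) :=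
        Finset.single_le_sum (f := fun j => Real.sqrt (∑ i, (W ℓ i j) ^ 2))
          (fun j _ => Real.sqrt_nonneg _) (Finset.mem_univ j)
    _ ≤ ∑ ℓ : Fin (M + 1), ∑ j : Fin (Nd ℓ.1), Real.sqrt (∑ i, (W ℓ i j) ^ 2) :=
        Finset.single_le_sum
          (f := fun ℓ : Fin (M + 1) => ∑ j : Fin (Nd ℓ.1), Real.sqrt (∑ i, (W ℓ i j) ^ 2))
          (fun ℓ _ => Finset.sum_nonneg fun j _ => Real.sqrt_nonneg _) (Finset.mem_univ ℓ)

lemma sq_state_le {lv θ : ℝ} (hlv : 0 < lv) {v : Vs M N Nd} (h : R2 lv v ≤ θ)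
    (n : Fin N) (ℓ : Fin (M + 1)) (i : Fin (Nd (ℓ.1 + 1))) : (v n ℓ.succ i) ^ 2 ≤ θ / lv := by
  rw [le_div_iff₀' hlv]
  exact le_trans (mul_le_mul_of_nonneg_left
    (term_le_sum_three (fun (n : Fin N) (ℓ : Fin (M + 1)) (i : Fin (Nd (ℓ.1 + 1))) =>
      (v n ℓ.succ i) ^ 2) (fun _ _ _ => sq_nonneg _) n ℓ i) hlv.le) h

/-- On the feasible cone all four terms of the penalized objective are nonnegative, so each of
the regularizers and each individual penalty gap is bounded by the level. -/
lemma bounds_of_mem {α β lw lv θ : ℝ} (hβ : 0 < β) (hlw : 0 < lw) (hlv : 0 < lv)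
    {x : Fin N → Fin (Nd 0) → ℝ} {y : Fin N → Fin (Nd (M + 1)) → ℝ} {z : Pt M N Nd}
    (hz : z ∈ levelSet α β lw lv θ x y) :
    R1 lw z.1 ≤ θ ∧ R2 lv z.2.2.1 ≤ θ ∧
      ∀ (n : Fin N) (ℓ : Fin (M + 1)) (i : Fin (Nd (ℓ.1 + 1))),
        z.2.2.1 n ℓ.succ i - lrelu α (z.2.2.2 n ℓ i) ≤ θ / β := by
  obtain ⟨⟨-, -, hcone⟩, hO⟩ := hz
  have hgap : ∀ (n : Fin N) (ℓ : Fin (M + 1)) (i : Fin (Nd (ℓ.1 + 1))),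
      0 ≤ z.2.2.1 n ℓ.succ i - lrelu α (z.2.2.2 n ℓ i) := fun n ℓ i =>
    sub_nonneg.2 (max_le (hcone n ℓ i).1 (hcone n ℓ i).2)
  have hfit : 0 ≤ (1 / (N : ℝ)) * ∑ n : Fin N, ∑ i : Fin (Nd (M + 1)),
      (z.2.2.1 n (Fin.last (M + 1)) i - y n i) ^ 2 := by positivity
  have h1 : 0 ≤ R1 lw z.1 := by unfold R1; positivity
  have h2 : 0 ≤ R2 lv z.2.2.1 := by unfold R2; positivity
  have h3 : 0 ≤ β * ∑ n : Fin N, ∑ ℓ : Fin (M + 1), ∑ i : Fin (Nd (ℓ.1 + 1)),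
      (z.2.2.1 n ℓ.succ i - lrelu α (z.2.2.2 n ℓ i)) :=
    mul_nonneg hβ.le (Finset.sum_nonneg fun n _ => Finset.sum_nonneg fun ℓ _ =>
      Finset.sum_nonneg fun i _ => hgap n ℓ i)
  unfold Opp Obar at hO
  refine ⟨by linarith, by linarith, fun n ℓ i => ?_⟩
  rw [le_div_iff₀' hβ]
  have := mul_le_mul_of_nonneg_left (term_le_sum_three
    (fun (n : Fin N) (ℓ : Fin (M + 1)) (i : Fin (Nd (ℓ.1 + 1))) =>
      z.2.2.1 n ℓ.succ i - lrelu α (z.2.2.2 n ℓ i)) hgap n ℓ i) hβ.le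
  linarith

/-- Since `α > 0`, the leaky ReLU is coercive at `-∞`: a lower bound on `lrelu α t` forces a
lower bound on `t`. -/
lemma neg_div_le_of_neg_le_lrelu {α t C : ℝ} (hα0 : 0 < α) (hα1 : α < 1) (hC : 0 ≤ C)
    (h : -C ≤ lrelu α t) : -(C / α) ≤ t := by
  have hCα : 0 ≤ C / α := by positivity
  rcases le_or_gt 0 t with ht | ht
  · linarith
  · have hm : lrelu α t = α * t := max_eq_right (by nlinarith)
    rw [hm] at h
    rw [← neg_div, div_le_iff₀ hα0]
    linarith

/-- the level set Ω_θ is a bounded subset of the variable space. -/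
theorem levelSet_isBounded
    (M N : ℕ) (Nd : ℕ → ℕ) (hN : 1 ≤ N) (hNd : ∀ ℓ ≤ M + 1, 1 ≤ Nd ℓ)
    (α β lw lv θ : ℝ) (hα0 : 0 < α) (hα1 : α < 1) (hβ : 0 < β)
    (hlw : 0 < lw) (hlv : 0 < lv)
    (x : Fin N → Fin (Nd 0) → ℝ) (y : Fin N → Fin (Nd (M + 1)) → ℝ)
    (hθ : (1 / (N : ℝ)) * ∑ n : Fin N, ∑ i : Fin (Nd (M + 1)), (y n i) ^ 2 < θ)
    : Bornology.IsBounded (levelSet α β lw lv θ x y) := by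
  have hθ0 : 0 < θ := lt_of_le_of_lt (by positivity) hθ
  set Cw : ℝ := θ / lw with hCw
  set Cx : ℝ := ∑ n, ∑ i, |x n i| with hCx
  -- `|t| ≤ t ^ 2 + 1` is used in place of a square root.
  set Cv : ℝ := θ / lv + 1 + Cx with hCv
  set Cu : ℝ := Cv + (Cv + θ / β) / α with hCu
  set D : ℝ := ∑ ℓ : Fin (M + 1), (Nd ℓ.1 : ℝ) with hD
  set Cb : ℝ := Cu + D * (Cw * Cv) with hCb
  have hCw0 : 0 ≤ Cw := by positivity
  have hCx0 : 0 ≤ Cx := by positivity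
  have hCv0 : 0 ≤ Cv := by positivity
  have hCu0 : 0 ≤ Cu := by positivity
  have hD0 : 0 ≤ D := by positivity
  have hCb0 : 0 ≤ Cb := by positivity
  have hR : 0 ≤ Cw + Cb + Cv + Cu := by positivity
  refine (Metric.isBounded_closedBall (x := (0 : Pt M N Nd)) (r := Cw + Cb + Cv + Cu)).subset ?_
  intro z hz
  obtain ⟨hR1, hR2, hgap⟩ := bounds_of_mem hβ hlw hlv hz
  obtain ⟨⟨hin, hlin, hcone⟩, -⟩ := hz
  have hW := abs_weight_le hlw hR1
  have hV : ∀ (n : Fin N) (ℓ : Fin (M + 2)) (i : Fin (Nd ℓ.1)), |z.2.2.1 n ℓ i| ≤ Cv := by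
    intro n ℓ
    refine Fin.cases (fun i => ?_) (fun ℓ i => ?_) ℓ
    · have hx : |x n i| ≤ Cx :=
        (Finset.single_le_sum (f := fun i => |x n i|) (fun i _ => abs_nonneg _)
          (Finset.mem_univ i)).trans
        (Finset.single_le_sum (f := fun n => ∑ i, |x n i|)
          (fun n _ => Finset.sum_nonneg fun i _ => abs_nonneg _) (Finset.mem_univ n))
      have h0 : z.2.2.1 n 0 i = x n i := congrFun (hin n) i
      have : 0 ≤ θ / lv := by positivity
      rw [h0]
      linarith
    · have h := sq_state_le hlv hR2 n ℓ i
      rw [← sq_abs] at h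
      nlinarith [sq_nonneg (|z.2.2.1 n ℓ.succ i| - 1), abs_nonneg (z.2.2.1 n ℓ.succ i)]
  have hU : ∀ (n : Fin N) (ℓ : Fin (M + 1)) (i : Fin (Nd (ℓ.1 + 1))),
      |z.2.2.2 n ℓ i| ≤ Cu := by
    intro n ℓ i
    have hv := abs_le.1 (hV n ℓ.succ i)
    have hlow := neg_div_le_of_neg_le_lrelu (C := Cv + θ / β) (t := z.2.2.2 n ℓ i) hα0 hα1
      (by positivity) (by linarith [hgap n ℓ i])
    have : 0 ≤ (Cv + θ / β) / α := by positivity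
    exact abs_le.2 ⟨by linarith, by linarith [(hcone n ℓ i).1]⟩
  have hB : ∀ (ℓ : Fin (M + 1)) (i : Fin (Nd (ℓ.1 + 1))), |z.2.1 ℓ i| ≤ Cb := by
    intro ℓ i
    let n : Fin N := ⟨0, hN⟩
    have hsum : |∑ j : Fin (Nd ℓ.1), z.1 ℓ i j * z.2.2.1 n ℓ.castSucc j| ≤ D * (Cw * Cv) := by
      calc |∑ j : Fin (Nd ℓ.1), z.1 ℓ i j * z.2.2.1 n ℓ.castSucc j|
          ≤ ∑ j : Fin (Nd ℓ.1), |z.1 ℓ i j * z.2.2.1 n ℓ.castSucc j| :=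
            Finset.abs_sum_le_sum_abs _ _
        _ ≤ ∑ _j : Fin (Nd ℓ.1), Cw * Cv := Finset.sum_le_sum fun j _ => by
            rw [abs_mul]
            exact mul_le_mul (hW ℓ i j) (hV n ℓ.castSucc j) (abs_nonneg _) hCw0
        _ = (Nd ℓ.1 : ℝ) * (Cw * Cv) := by simp
        _ ≤ D * (Cw * Cv) := mul_le_mul_of_nonneg_right
            (Finset.single_le_sum (f := fun ℓ : Fin (M + 1) => (Nd ℓ.1 : ℝ))
              (fun ℓ _ => Nat.cast_nonneg _) (Finset.mem_univ ℓ)) (by positivity)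
    have hu := abs_le.1 (hU n ℓ i)
    have hs := abs_le.1 hsum
    have hl := hlin n ℓ i
    exact abs_le.2 ⟨by linarith, by linarith⟩
  rw [mem_closedBall_zero_iff, norm_prod_le_iff, norm_prod_le_iff, norm_prod_le_iff]
  refine ⟨?_, ?_, ?_, ?_⟩
  · refine (pi_norm_le_iff_of_nonneg hR).2 fun ℓ => (pi_norm_le_iff_of_nonneg hR).2 fun i =>
      (pi_norm_le_iff_of_nonneg hR).2 fun j => ?_
    rw [Real.norm_eq_abs]
    linarith [hW ℓ i j]
  · refine (pi_norm_le_iff_of_nonneg hR).2 fun ℓ => (pi_norm_le_iff_of_nonneg hR).2 fun i => ?_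
    rw [Real.norm_eq_abs]
    linarith [hB ℓ i]
  · refine (pi_norm_le_iff_of_nonneg hR).2 fun n => (pi_norm_le_iff_of_nonneg hR).2 fun ℓ =>
      (pi_norm_le_iff_of_nonneg hR).2 fun i => ?_
    rw [Real.norm_eq_abs]
    linarith [hV n ℓ i]
  · refine (pi_norm_le_iff_of_nonneg hR).2 fun n => (pi_norm_le_iff_of_nonneg hR).2 fun ℓ =>
      (pi_norm_le_iff_of_nonneg hR).2 fun i => ?_
    rw [Real.norm_eq_abs]
    linarith [hU n ℓ i]
end
end

section
/- (Core of the Mangasarian–Fromovitz constraint qualification for (PP).) Let W_ℓ ∈ ℝ^{N_ℓ×N_{ℓ−1}} for ℓ = 1,…,L be arbitrary matrices. Suppose vectors μ¹_{n,ℓ}, μ²_{n,ℓ} ∈ ℝ^{N_ℓ} with μ¹_{n,ℓ} ≥ 0 and μ²_{n,ℓ} ≥ 0, and vectors ξ_{n,ℓ} ∈ ℝ^{N_ℓ}, for n ∈ [N], ℓ ∈ [L], satisfy: (i) μ¹_{n,L} + μ²_{n,L} = 0 for all n; (ii) μ¹_{n,ℓ} + μ²_{n,ℓ} + (W_{ℓ+1})ᵀ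 ξ_{n,ℓ+1} = 0 for all n and all ℓ = 1,…,L−1; (iii) μ¹_{n,ℓ} + α μ²_{n,ℓ} + ξ_{n,ℓ} = 0 for all n and all ℓ. Then μ¹_{n,ℓ} = μ²_{n,ℓ} = ξ_{n,ℓ} = 0 for all n ∈ [N] and ℓ ∈ [L]. -/
/-!
The multipliers are killed layer by layer, from the top layer downwards. At each layer the
stationarity equation in `v` reads `μ¹ + μ² + Wᵀ ξ = 0`, where `ξ` belongs to the layer above (the
`ξ` term is absent at the top). Once that `ξ` is known to vanish, `μ¹ + μ² = 0` with both summands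
nonnegative gives `μ¹ = μ² = 0`, and the stationarity equation in `u`, `μ¹ + α μ² + ξ = 0`, then
gives `ξ = 0` at the current layer.
-/

open Finset Filter Topology

noncomputable section

variable {M N : ℕ} {Nd : ℕ → ℕ}

/-- core of the MFCQ for problem (PP): the homogeneous multiplier
system only has the zero solution.  Layer `ℓ : Fin (M+1)` corresponds to layer
`ℓ+1 ∈ [L]` of the paper, `L = M + 1`. -/
theorem mfcq_core
    (M N : ℕ) (Nd : ℕ → ℕ) (hN : 1 ≤ N) (hNd : ∀ ℓ ≤ M + 1, 1 ≤ Nd ℓ)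
    (α : ℝ) (hα0 : 0 < α) (hα1 : α < 1)
    (W : Wt M Nd) (μ1 μ2 ξ : Us M N Nd)
    (hμ1 : ∀ (n : Fin N) (ℓ : Fin (M + 1)) (i : Fin (Nd (ℓ.1 + 1))), 0 ≤ μ1 n ℓ i)
    (hμ2 : ∀ (n : Fin N) (ℓ : Fin (M + 1)) (i : Fin (Nd (ℓ.1 + 1))), 0 ≤ μ2 n ℓ i)
    (htop : ∀ (n : Fin N) (i : Fin (Nd (M + 1))),
      μ1 n (Fin.last M) i + μ2 n (Fin.last M) i = 0)
    (hmid : ∀ (n : Fin N) (ℓ : Fin M) (i : Fin (Nd (ℓ.1 + 1))),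
      μ1 n ℓ.castSucc i + μ2 n ℓ.castSucc i
        + ∑ j : Fin (Nd (ℓ.1 + 2)), W ℓ.succ j i * ξ n ℓ.succ j = 0)
    (hall : ∀ (n : Fin N) (ℓ : Fin (M + 1)) (i : Fin (Nd (ℓ.1 + 1))),
      μ1 n ℓ i + α * μ2 n ℓ i + ξ n ℓ i = 0) :
    ∀ (n : Fin N) (ℓ : Fin (M + 1)) (i : Fin (Nd (ℓ.1 + 1))),
      μ1 n ℓ i = 0 ∧ μ2 n ℓ i = 0 ∧ ξ n ℓ i = 0 := by
  intro n ℓ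
  have key : ∀ (ℓ : Fin (M + 1)) (i : Fin (Nd (ℓ.1 + 1))), μ1 n ℓ i + μ2 n ℓ i = 0 →
      μ1 n ℓ i = 0 ∧ μ2 n ℓ i = 0 ∧ ξ n ℓ i = 0 := by
    intro ℓ i h
    have h1 : μ1 n ℓ i = 0 := by linarith [hμ1 n ℓ i, hμ2 n ℓ i]
    have h2 : μ2 n ℓ i = 0 := by linarith
    have h3 := hall n ℓ i
    rw [h1, h2] at h3
    exact ⟨h1, h2, by linarith⟩
  induction ℓ using Fin.reverseInduction with
  | last => exact fun i => key _ i (htop n i)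
  | cast ℓ ih =>
    intro i
    refine key _ i ?_
    have hsum : ∑ j : Fin (Nd (ℓ.1 + 2)), W ℓ.succ j i * ξ n ℓ.succ j = 0 :=
      Finset.sum_eq_zero fun j _ => by rw [(ih j).2.2, mul_zero]
    have h := hmid n ℓ i
    rwa [hsum, add_zero] at h
end
end

section
/- (Exact penalty: global minimizers.) Suppose β > L·L_Ō·max{θ_w, 1}^L. Then (w*,b*,v*,u*) is a global minimizer of O over Ω₂ if and only if (w*,b*,v*,u*) is a global minimizer of Ō over Ω₁. -/
/-!
The points of `Ω₂` are parametrised by weights, biases and nonnegative slacks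
`s = v - σ(u)`: given `(w, b, s)`, the network recursion `v_ℓ = σ(W_ℓ v_{ℓ-1} + b_ℓ) + s_ℓ`
determines the point, and `Ω₁` is the part with `s = 0`. The penalty is `β` times the sum of the
slacks.

Fix a point of `Ω₂` with slack `s` and `O < θ`, and shrink its slack to `t • s`, `t ∈ [0, 1]`, with
the weights and biases kept. On the level set the regulariser bounds the operator norm of each `W_ℓ`
by `θ / λ_w ≤ θ_w`, so a change of slack of total size `δ` moves the point by at most
`L · max{θ_w, 1}^L · δ` in Euclidean norm (`l2dist_netPt_le`). Hence, as long as the path stays in the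
level set, shrinking the slack by `δ` changes `Ō` by less than `β δ`, and `O` decreases
(`Opp_path_le`). The Lipschitz bound is available on the level set only, so membership of the whole
path is obtained from continuity of `O` and real induction. The endpoint `t = 0` lies in `Ω₁`
(`exists_feas1_le`): every point of `Ω₂` below `θ` is dominated by a point of `Ω₁`, strictly
unless its slack vanishes. As the zero network has `O < θ`, both minimisation problems only
concern points below `θ`, and the equivalence follows.
-/

open Finset Filter Topology

noncomputable section

variable {M N : ℕ} {Nd : ℕ → ℕ}

/-! ### Euclidean norm estimates -/

/-- Euclidean norm of a real vector given as a plain function. -/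
def vecNorm {k : ℕ} (a : Fin k → ℝ) : ℝ := ‖(WithLp.toLp 2 a : EuclideanSpace ℝ (Fin k))‖

lemma vecNorm_eq_sqrt {k : ℕ} (a : Fin k → ℝ) : vecNorm a = Real.sqrt (∑ i, a i ^ 2) := by
  simp [vecNorm, EuclideanSpace.norm_eq]

lemma vecNorm_nonneg {k : ℕ} (a : Fin k → ℝ) : 0 ≤ vecNorm a := norm_nonneg _

lemma vecNorm_sq {k : ℕ} (a : Fin k → ℝ) : vecNorm a ^ 2 = ∑ i, a i ^ 2 := by
  rw [vecNorm_eq_sqrt, Real.sq_sqrt (Finset.sum_nonneg fun i _ => sq_nonneg _)]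

lemma vecNorm_add_le {k : ℕ} (a c : Fin k → ℝ) :
    vecNorm (fun i => a i + c i) ≤ vecNorm a + vecNorm c :=
  norm_add_le (WithLp.toLp 2 a : EuclideanSpace ℝ (Fin k)) (WithLp.toLp 2 c)

lemma vecNorm_le_of_abs_le {k : ℕ} {a c : Fin k → ℝ} (h : ∀ i, |a i| ≤ |c i|) :
    vecNorm a ≤ vecNorm c := by
  rw [vecNorm_eq_sqrt, vecNorm_eq_sqrt]
  exact Real.sqrt_le_sqrt (Finset.sum_le_sum fun i _ => sq_le_sq.2 (h i))

lemma vecNorm_le_sum_abs {k : ℕ} (a : Fin k → ℝ) : vecNorm a ≤ ∑ i, |a i| := by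
  rw [vecNorm_eq_sqrt]
  refine Real.sqrt_le_iff.2 ⟨Finset.sum_nonneg fun i _ => abs_nonneg _, ?_⟩
  have := Finset.sum_sq_le_sq_sum_of_nonneg (s := Finset.univ) (f := fun i => |a i|)
    (fun i _ => abs_nonneg _)
  simpa using this

lemma abs_le_vecNorm {k : ℕ} (a : Fin k → ℝ) (j : Fin k) : |a j| ≤ vecNorm a := by
  rw [vecNorm_eq_sqrt]
  refine Real.abs_le_sqrt ?_
  exact Finset.single_le_sum (f := fun i => a i ^ 2) (fun i _ => sq_nonneg _) (Finset.mem_univ j)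

/-- The operator norm of a matrix is at most the sum of the norms of its columns. -/
lemma vecNorm_mul_le {p q : ℕ} (A : Fin p → Fin q → ℝ) (a : Fin q → ℝ) :
    vecNorm (fun i => ∑ j, A i j * a j) ≤ (∑ j, vecNorm (fun i => A i j)) * vecNorm a := by
  have h : (WithLp.toLp 2 (fun i => ∑ j, A i j * a j) : EuclideanSpace ℝ (Fin p))
      = ∑ j, a j • (WithLp.toLp 2 (fun i => A i j) : EuclideanSpace ℝ (Fin p)) := by
    ext i
    simp [mul_comm]
  unfold vecNorm
  rw [h, Finset.sum_mul]
  refine (norm_sum_le _ _).trans (Finset.sum_le_sum fun j _ => ?_)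
  rw [norm_smul, mul_comm]
  exact mul_le_mul_of_nonneg_left (abs_le_vecNorm a j) (norm_nonneg _)

lemma abs_lrelu_sub_le {α : ℝ} (hα0 : 0 < α) (hα1 : α < 1) (a c : ℝ) :
    |lrelu α a - lrelu α c| ≤ |a - c| := by
  refine (abs_max_sub_max_le_max _ _ _ _).trans (max_le le_rfl ?_)
  rw [← mul_sub, abs_mul, abs_of_pos hα0]
  exact mul_le_of_le_one_left (abs_nonneg _) hα1.le

/-! ### Parametrisation of the feasible set by slacks -/

/-- Layer `ℓ` of the network run on one input `x` with weights `W`, biases `b` and an additive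
slack `s` after each activation; zero beyond the last layer. -/
def net (α : ℝ) (x : Fin (Nd 0) → ℝ) (W : Wt M Nd) (b : Bs M Nd) (s : Bs M Nd) :
    (ℓ : ℕ) → Fin (Nd ℓ) → ℝ
  | 0 => x
  | ℓ + 1 => fun i =>
      if h : ℓ < M + 1 then
        lrelu α ((∑ j : Fin (Nd ℓ), W ⟨ℓ, h⟩ i j * net α x W b s ℓ j) + b ⟨ℓ, h⟩ i) + s ⟨ℓ, h⟩ i
      else 0

/-- The preactivation of layer `ℓ + 1` for the network with slacks. -/
def pre (α : ℝ) (x : Fin (Nd 0) → ℝ) (W : Wt M Nd) (b : Bs M Nd) (s : Bs M Nd)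
    (ℓ : Fin (M + 1)) (i : Fin (Nd (ℓ.1 + 1))) : ℝ :=
  (∑ j : Fin (Nd ℓ.1), W ℓ i j * net α x W b s ℓ.1 j) + b ℓ i

lemma net_succ (α : ℝ) (x : Fin (Nd 0) → ℝ) (W : Wt M Nd) (b : Bs M Nd) (s : Bs M Nd)
    (ℓ : Fin (M + 1)) (i : Fin (Nd (ℓ.1 + 1))) :
    net α x W b s (ℓ.1 + 1) i = lrelu α (pre α x W b s ℓ i) + s ℓ i := by
  simp only [net, pre, ℓ.2, dite_true]

/-- The point with weights `W`, biases `b` and slacks `s`. -/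
def netPt (α : ℝ) (x : Fin N → Fin (Nd 0) → ℝ) (W : Wt M Nd) (b : Bs M Nd) (s : Us M N Nd) :
    Pt M N Nd :=
  (W, b, fun n ℓ => net α (x n) W b (s n) ℓ.1, fun n => pre α (x n) W b (s n))

/-- The slacks `v - σ(u)` of a point. -/
def slack (α : ℝ) (z : Pt M N Nd) : Us M N Nd :=
  fun n ℓ i => z.2.2.1 n ℓ.succ i - lrelu α (z.2.2.2 n ℓ i)

lemma slack_netPt (α : ℝ) (x : Fin N → Fin (Nd 0) → ℝ) (W : Wt M Nd) (b : Bs M Nd)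
    (s : Us M N Nd) : slack α (netPt α x W b s) = s := by
  funext n ℓ i
  have := net_succ α (x n) W b (s n) ℓ i
  simp only [slack, netPt, Fin.val_succ]
  exact sub_eq_iff_eq_add'.2 this

/-- A point satisfying the input and linear constraints is determined by its weights, biases and
slacks. -/
lemma netPt_slack {α : ℝ} {x : Fin N → Fin (Nd 0) → ℝ} {z : Pt M N Nd}
    (h0 : inputEq x z) (hl : linEq z) : netPt α x z.1 z.2.1 (slack α z) = z := by
  obtain ⟨W, b, v, u⟩ := z
  have hv : ∀ n (ℓ : ℕ) (h : ℓ < M + 2),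
      net α (x n) W b (slack α (W, b, v, u) n) ℓ = v n ⟨ℓ, h⟩ := by
    intro n ℓ
    induction ℓ with
    | zero => intro h; exact (h0 n).symm
    | succ ℓ ih =>
      intro h
      have hℓ : ℓ < M + 1 := by omega
      funext i
      have h1 := net_succ α (x n) W b (slack α (W, b, v, u) n) ⟨ℓ, hℓ⟩ i
      have h2 : pre α (x n) W b (slack α (W, b, v, u) n) ⟨ℓ, hℓ⟩ i = u n ⟨ℓ, hℓ⟩ i := by
        have h3 := hl n ⟨ℓ, hℓ⟩ i
        refine Eq.trans ?_ h3.symm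
        simp only [pre]
        rw [ih (by omega)]
        rfl
      rw [h2] at h1
      refine h1.trans ?_
      simp only [slack]
      exact add_sub_cancel _ _
  have hu : (fun n => pre α (x n) W b (slack α (W, b, v, u) n)) = u := by
    funext n ℓ i
    have h3 := hl n ℓ i
    refine Eq.trans ?_ h3.symm
    simp only [pre]
    rw [hv n ℓ.1 (by omega)]
    rfl
  have hv' : (fun n (ℓ : Fin (M + 2)) => net α (x n) W b (slack α (W, b, v, u) n) ℓ.1) = v := by
    funext n ℓ
    exact hv n ℓ.1 ℓ.2
  simp only [netPt]
  rw [hu, hv']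

lemma slack_nonneg {α : ℝ} {z : Pt M N Nd} (h : inCone α z) (n : Fin N) (ℓ : Fin (M + 1))
    (i : Fin (Nd (ℓ.1 + 1))) : 0 ≤ slack α z n ℓ i :=
  sub_nonneg.2 (max_le (h n ℓ i).1 (h n ℓ i).2)

lemma inCone_of_slack_nonneg {α : ℝ} {z : Pt M N Nd} (h : ∀ n ℓ i, 0 ≤ slack α z n ℓ i) :
    inCone α z := fun n ℓ i =>
  ⟨(le_max_left _ _).trans (sub_nonneg.1 (h n ℓ i)),
    (le_max_right _ _).trans (sub_nonneg.1 (h n ℓ i))⟩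

lemma netPt_inputEq (α : ℝ) (x : Fin N → Fin (Nd 0) → ℝ) (W : Wt M Nd) (b : Bs M Nd)
    (s : Us M N Nd) : inputEq x (netPt α x W b s) := fun _ => rfl

lemma netPt_linEq (α : ℝ) (x : Fin N → Fin (Nd 0) → ℝ) (W : Wt M Nd) (b : Bs M Nd)
    (s : Us M N Nd) : linEq (netPt α x W b s) := fun _ _ _ => rfl

lemma netPt_feas2 {α : ℝ} (x : Fin N → Fin (Nd 0) → ℝ) (W : Wt M Nd) (b : Bs M Nd)
    {s : Us M N Nd} (hs : ∀ n ℓ i, 0 ≤ s n ℓ i) : feas2 α x (netPt α x W b s) :=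
  ⟨netPt_inputEq _ _ _ _ _, netPt_linEq _ _ _ _ _, inCone_of_slack_nonneg (by rwa [slack_netPt])⟩

lemma feas1_iff_slack_eq_zero {α : ℝ} {x : Fin N → Fin (Nd 0) → ℝ} {z : Pt M N Nd} :
    feas1 α x z ↔ inputEq x z ∧ linEq z ∧ ∀ n ℓ i, slack α z n ℓ i = 0 := by
  simp only [feas1, slack, sub_eq_zero]

/-- The sum of all entries of a family of slacks. -/
def total (s : Us M N Nd) : ℝ := ∑ n, ∑ ℓ, ∑ i, s n ℓ i

lemma total_nonneg {s : Us M N Nd} (hs : ∀ n ℓ i, 0 ≤ s n ℓ i) : 0 ≤ total s :=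
  Finset.sum_nonneg fun n _ => Finset.sum_nonneg fun ℓ _ => Finset.sum_nonneg fun i _ => hs n ℓ i

lemma eq_zero_of_total_eq_zero {s : Us M N Nd} (hs : ∀ n ℓ i, 0 ≤ s n ℓ i) (h : total s = 0) :
    ∀ n ℓ i, s n ℓ i = 0 := by
  intro n ℓ i
  have h1 := (Finset.sum_eq_zero_iff_of_nonneg fun n _ => Finset.sum_nonneg fun ℓ _ =>
    Finset.sum_nonneg fun i _ => hs n ℓ i).1 h n (Finset.mem_univ _)
  have h2 := (Finset.sum_eq_zero_iff_of_nonneg fun ℓ _ =>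
    Finset.sum_nonneg fun i _ => hs n ℓ i).1 h1 ℓ (Finset.mem_univ _)
  exact (Finset.sum_eq_zero_iff_of_nonneg fun i _ => hs n ℓ i).1 h2 i (Finset.mem_univ _)

lemma Opp_eq (α β lw lv : ℝ) (y : Fin N → Fin (Nd (M + 1)) → ℝ) (z : Pt M N Nd) :
    Opp α β lw lv y z = Obar lw lv y z + β * total (slack α z) := rfl

lemma total_smul (t : ℝ) (s : Us M N Nd) : total (t • s) = t * total s := by
  simp [total, Finset.mul_sum]

lemma total_abs_smul_sub {s : Us M N Nd} (hs : ∀ n ℓ i, 0 ≤ s n ℓ i) {t t' : ℝ} (h : t' ≤ t) :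
    total (fun n ℓ i => |(t • s) n ℓ i - (t' • s) n ℓ i|) = (t - t') * total s := by
  rw [← total_smul]
  congr 1
  funext n ℓ i
  simp only [Pi.smul_apply, smul_eq_mul]
  rw [← sub_mul, abs_of_nonneg (mul_nonneg (sub_nonneg.2 h) (hs n ℓ i))]

/-! ### Propagation of slack perturbations -/

section perturbation

/-- Total slack change in layer `k + 1`, for one sample; zero beyond the last layer. -/
def layerGap (s s' : Bs M Nd) (k : ℕ) : ℝ :=
  if h : k < M + 1 then ∑ i, |s ⟨k, h⟩ i - s' ⟨k, h⟩ i| else 0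

lemma layerGap_nonneg (s s' : Bs M Nd) (k : ℕ) : 0 ≤ layerGap s s' k := by
  unfold layerGap
  split_ifs
  · exact Finset.sum_nonneg fun i _ => abs_nonneg _
  · exact le_rfl

lemma sum_layerGap (s s' : Bs M Nd) :
    ∑ k ∈ Finset.range (M + 1), layerGap s s' k = ∑ ℓ, ∑ i, |s ℓ i - s' ℓ i| := by
  rw [Finset.sum_range]
  refine Finset.sum_congr rfl fun ℓ _ => ?_
  simp only [layerGap, ℓ.2, dite_true]

variable {α K : ℝ} (x : Fin (Nd 0) → ℝ) {W : Wt M Nd} (b : Bs M Nd) (s s' : Bs M Nd)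

lemma vecNorm_pre_sub_le (hW : ∀ ℓ, ∑ j, vecNorm (fun i => W ℓ i j) ≤ K) (ℓ : Fin (M + 1)) :
    vecNorm (fun i => pre α x W b s ℓ i - pre α x W b s' ℓ i)
      ≤ K * vecNorm (fun j => net α x W b s ℓ.1 j - net α x W b s' ℓ.1 j) := by
  have h : (fun i => pre α x W b s ℓ i - pre α x W b s' ℓ i)
      = fun i => ∑ j, W ℓ i j * (net α x W b s ℓ.1 j - net α x W b s' ℓ.1 j) := by
    funext i
    simp only [pre, mul_sub, Finset.sum_sub_distrib]
    ring
  rw [h]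
  exact (vecNorm_mul_le _ _).trans (mul_le_mul_of_nonneg_right (hW ℓ) (vecNorm_nonneg _))

/-- Layer `ℓ` moves by at most `K ^ ℓ` times the slack change in the layers up to `ℓ`. -/
lemma vecNorm_net_sub_le (hα0 : 0 < α) (hα1 : α < 1) (hK : 1 ≤ K)
    (hW : ∀ ℓ, ∑ j, vecNorm (fun i => W ℓ i j) ≤ K) (ℓ : ℕ) (hℓ : ℓ < M + 2) :
    vecNorm (fun j => net α x W b s ℓ j - net α x W b s' ℓ j)
      ≤ K ^ ℓ * ∑ k ∈ Finset.range ℓ, layerGap s s' k := by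
  induction ℓ with
  | zero => simp [net, vecNorm_eq_sqrt]
  | succ ℓ ih =>
    have hl : ℓ < M + 1 := by omega
    have ih := ih (by omega)
    have h1 : vecNorm (fun i => net α x W b s (ℓ + 1) i - net α x W b s' (ℓ + 1) i)
        ≤ vecNorm (fun i => lrelu α (pre α x W b s ⟨ℓ, hl⟩ i) - lrelu α (pre α x W b s' ⟨ℓ, hl⟩ i))
          + vecNorm (fun i => s ⟨ℓ, hl⟩ i - s' ⟨ℓ, hl⟩ i) := by
      refine le_trans (le_of_eq ?_) (vecNorm_add_le _ _)
      congr 1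
      funext i
      have e1 := net_succ α x W b s ⟨ℓ, hl⟩ i
      have e2 := net_succ α x W b s' ⟨ℓ, hl⟩ i
      simp only at e1 e2
      rw [e1, e2]
      ring
    have h2 : vecNorm (fun i => s ⟨ℓ, hl⟩ i - s' ⟨ℓ, hl⟩ i) ≤ layerGap s s' ℓ := by
      refine (vecNorm_le_sum_abs _).trans (le_of_eq ?_)
      simp [layerGap, hl]
    have h3 := vecNorm_pre_sub_le (α := α) x b s s' hW ⟨ℓ, hl⟩
    have h4 : vecNorm (fun i => lrelu α (pre α x W b s ⟨ℓ, hl⟩ i)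
          - lrelu α (pre α x W b s' ⟨ℓ, hl⟩ i))
        ≤ vecNorm (fun i => pre α x W b s ⟨ℓ, hl⟩ i - pre α x W b s' ⟨ℓ, hl⟩ i) :=
      vecNorm_le_of_abs_le fun i => abs_lrelu_sub_le hα0 hα1 _ _
    have h5 := mul_le_mul_of_nonneg_left ih (zero_le_one.trans hK)
    have h6 : layerGap s s' ℓ ≤ K ^ (ℓ + 1) * layerGap s s' ℓ :=
      le_mul_of_one_le_left (layerGap_nonneg _ _ _) (one_le_pow₀ hK)
    rw [Finset.sum_range_succ, mul_add, pow_succ']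
    rw [pow_succ'] at h6
    simp only at h3
    linarith

/-- Squared movement of all `v` and `u` variables of one sample. There are `M + 1` layers of `v` and
`M` layers of `u` that can move, and `2 * M + 1 ≤ (M + 1) ^ 2`. -/
lemma sum_sq_net_le (hα0 : 0 < α) (hα1 : α < 1) (hK : 1 ≤ K)
    (hW : ∀ ℓ, ∑ j, vecNorm (fun i => W ℓ i j) ≤ K) :
    (∑ ℓ : Fin (M + 2), ∑ i, (net α x W b s ℓ.1 i - net α x W b s' ℓ.1 i) ^ 2)
      + ∑ ℓ : Fin (M + 1), ∑ i, (pre α x W b s ℓ i - pre α x W b s' ℓ i) ^ 2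
      ≤ ((M + 1) * K ^ (M + 1) * ∑ ℓ, ∑ i, |s ℓ i - s' ℓ i|) ^ 2 := by
  set G := ∑ ℓ, ∑ i, |s ℓ i - s' ℓ i| with hG
  have hG0 : 0 ≤ G := Finset.sum_nonneg fun _ _ => Finset.sum_nonneg fun _ _ => abs_nonneg _
  have hK0 : 0 ≤ K := zero_le_one.trans hK
  have hsum : ∀ ℓ ≤ M + 1, ∑ k ∈ Finset.range ℓ, layerGap s s' k ≤ G := by
    intro ℓ hℓ
    rw [hG, ← sum_layerGap]
    exact Finset.sum_le_sum_of_subset_of_nonneg (Finset.range_mono hℓ)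
      fun k _ _ => layerGap_nonneg _ _ _
  have hv : ∀ ℓ ≤ M + 1, vecNorm (fun j => net α x W b s ℓ j - net α x W b s' ℓ j)
      ≤ K ^ ℓ * G := fun ℓ hℓ =>
    (vecNorm_net_sub_le x b s s' hα0 hα1 hK hW ℓ (by omega)).trans
      (mul_le_mul_of_nonneg_left (hsum ℓ hℓ) (by positivity))
  have hvsq : ∀ ℓ ≤ M + 1, ∑ i, (net α x W b s ℓ i - net α x W b s' ℓ i) ^ 2
      ≤ (K ^ (M + 1) * G) ^ 2 := by
    intro ℓ hℓ
    rw [← vecNorm_sq]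
    refine pow_le_pow_left₀ (vecNorm_nonneg _) ((hv ℓ hℓ).trans ?_) 2
    exact mul_le_mul_of_nonneg_right (pow_le_pow_right₀ hK hℓ) hG0
  have husq : ∀ ℓ : Fin (M + 1), ∑ i, (pre α x W b s ℓ i - pre α x W b s' ℓ i) ^ 2
      ≤ (K ^ (M + 1) * G) ^ 2 := by
    intro ℓ
    rw [← vecNorm_sq]
    refine pow_le_pow_left₀ (vecNorm_nonneg _) ((vecNorm_pre_sub_le x b s s' hW ℓ).trans ?_) 2
    refine (mul_le_mul_of_nonneg_left (hv ℓ.1 (by omega)) hK0).trans ?_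
    rw [← mul_assoc, ← pow_succ']
    exact mul_le_mul_of_nonneg_right (pow_le_pow_right₀ hK (by omega)) hG0
  rw [Fin.sum_univ_succ (n := M + 1), Fin.sum_univ_succ (n := M)
    (f := fun ℓ => ∑ i, (pre α x W b s ℓ i - pre α x W b s' ℓ i) ^ 2)]
  have e1 : ∑ i, (net α x W b s ((0 : Fin (M + 2)) : ℕ) i
      - net α x W b s' ((0 : Fin (M + 2)) : ℕ) i) ^ 2 = 0 :=
    Finset.sum_eq_zero fun i _ => by simp [net]
  have e2 : ∑ i, (pre α x W b s (0 : Fin (M + 1)) i - pre α x W b s' (0 : Fin (M + 1)) i) ^ 2 = 0 :=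
    Finset.sum_eq_zero fun i _ => by simp [pre, net]
  have e3 : ∑ ℓ : Fin (M + 1), ∑ i, (net α x W b s ℓ.succ.1 i - net α x W b s' ℓ.succ.1 i) ^ 2
      ≤ ∑ _ℓ : Fin (M + 1), (K ^ (M + 1) * G) ^ 2 :=
    Finset.sum_le_sum fun ℓ _ => hvsq ℓ.succ.1 (by simp; omega)
  have e4 : ∑ ℓ : Fin M, ∑ i, (pre α x W b s ℓ.succ i - pre α x W b s' ℓ.succ i) ^ 2
      ≤ ∑ _ℓ : Fin M, (K ^ (M + 1) * G) ^ 2 :=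
    Finset.sum_le_sum fun ℓ _ => husq ℓ.succ
  rw [e1, e2]
  simp only [Finset.sum_const, Finset.card_univ, Fintype.card_fin, nsmul_eq_mul] at e3 e4
  push_cast at e3 e4
  have e5 : 0 ≤ (M : ℝ) ^ 2 * (K ^ (M + 1) * G) ^ 2 := by positivity
  nlinarith [e3, e4, e5]

end perturbation

lemma l2dist_netPt_le {α K : ℝ} (hα0 : 0 < α) (hα1 : α < 1) (hK : 1 ≤ K)
    (x : Fin N → Fin (Nd 0) → ℝ) {W : Wt M Nd} (b : Bs M Nd) (s s' : Us M N Nd)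
    (hW : ∀ ℓ, ∑ j, vecNorm (fun i => W ℓ i j) ≤ K) :
    l2dist (netPt α x W b s) (netPt α x W b s')
      ≤ (M + 1) * K ^ (M + 1) * total (fun n ℓ i => |s n ℓ i - s' n ℓ i|) := by
  have hK0 : 0 ≤ K := zero_le_one.trans hK
  have hG0 : ∀ n, 0 ≤ ∑ ℓ, ∑ i, |s n ℓ i - s' n ℓ i| := fun n =>
    Finset.sum_nonneg fun _ _ => Finset.sum_nonneg fun _ _ => abs_nonneg _
  have hT : 0 ≤ total (fun n ℓ i => |s n ℓ i - s' n ℓ i|) := total_nonneg fun _ _ _ => abs_nonneg _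
  unfold l2dist
  refine Real.sqrt_le_iff.2 ⟨by positivity, ?_⟩
  simp only [netPt, sub_self, ne_eq, OfNat.ofNat_ne_zero, not_false_eq_true, zero_pow,
    Finset.sum_const_zero, zero_add]
  rw [← Finset.sum_add_distrib]
  refine (Finset.sum_le_sum fun n _ =>
    sum_sq_net_le (x n) b (s n) (s' n) hα0 hα1 hK hW).trans ?_
  refine (Finset.sum_sq_le_sq_sum_of_nonneg fun n _ => ?_).trans (le_of_eq ?_)
  · have := hG0 n
    positivity
  · rw [← Finset.mul_sum]
    rfl

/-! ### Continuity of the penalised objective along the slack path -/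

lemma continuous_Opp (α β lw lv : ℝ) (y : Fin N → Fin (Nd (M + 1)) → ℝ) :
    Continuous (Opp (M := M) α β lw lv y) := by
  unfold Opp Obar R1 R2 lrelu
  fun_prop

lemma continuous_net (α : ℝ) (x : Fin (Nd 0) → ℝ) (W : Wt M Nd) (b : Bs M Nd) (ℓ : ℕ) :
    Continuous fun s : Bs M Nd => net α x W b s ℓ := by
  induction ℓ with
  | zero => exact continuous_const
  | succ ℓ ih =>
    refine continuous_pi fun i => ?_
    by_cases h : ℓ < M + 1
    · simp only [net, h, dite_true, lrelu]
      fun_prop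
    · simp only [net, h, dite_false]
      exact continuous_const

lemma continuous_netPt (α : ℝ) (x : Fin N → Fin (Nd 0) → ℝ) (W : Wt M Nd) (b : Bs M Nd) :
    Continuous fun s : Us M N Nd => netPt α x W b s := by
  have h : ∀ (n : Fin N) (ℓ : ℕ), Continuous fun s : Us M N Nd => net α (x n) W b (s n) ℓ :=
    fun n ℓ => (continuous_net α (x n) W b ℓ).comp (continuous_apply n)
  refine continuous_const.prodMk (continuous_const.prodMk (Continuous.prodMk ?_ ?_))
  · exact continuous_pi fun n => continuous_pi fun ℓ => h n ℓ.1
  · refine continuous_pi fun n => continuous_pi fun ℓ => continuous_pi fun i => ?_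
    have := h n ℓ.1
    unfold pre
    fun_prop

/-! ### Descent along the slack path -/

lemma R1_le_Opp {α β lw lv : ℝ} (hβ : 0 < β) (hlv : 0 < lv)
    (y : Fin N → Fin (Nd (M + 1)) → ℝ) {z : Pt M N Nd} (hz : inCone α z) :
    R1 lw z.1 ≤ Opp α β lw lv y z := by
  have h1 : 0 ≤ (1 / (N : ℝ)) * ∑ n : Fin N, ∑ i : Fin (Nd (M + 1)),
      (z.2.2.1 n (Fin.last (M + 1)) i - y n i) ^ 2 := by positivity
  have h2 : 0 ≤ R2 lv z.2.2.1 := by unfold R2; positivity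
  have h3 : 0 ≤ β * total (slack α z) := mul_nonneg hβ.le (total_nonneg (slack_nonneg hz))
  rw [Opp_eq, Obar]
  linarith

lemma sum_vecNorm_le {lw θ : ℝ} (hlw : 0 < lw) {W : Wt M Nd} (h : R1 lw W ≤ θ)
    (ℓ : Fin (M + 1)) : ∑ j, vecNorm (fun i => W ℓ i j) ≤ θ / lw := by
  rw [le_div_iff₀' hlw]
  refine le_trans (mul_le_mul_of_nonneg_left ?_ hlw.le) h
  simp only [vecNorm_eq_sqrt]
  exact Finset.single_le_sum (f := fun ℓ : Fin (M + 1) => ∑ j : Fin (Nd ℓ.1),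
    Real.sqrt (∑ i : Fin (Nd (ℓ.1 + 1)), (W ℓ i j) ^ 2))
    (fun ℓ _ => Finset.sum_nonneg fun j _ => Real.sqrt_nonneg _) (Finset.mem_univ ℓ)

/-- Between two points of the path lying in the level set, `O` drops at rate at least
`β - L · L_Ō · K ^ L` with respect to the total slack. -/
lemma Opp_path_le {α β lw lv θ LO K : ℝ} (hα0 : 0 < α) (hα1 : α < 1)
    {x : Fin N → Fin (Nd 0) → ℝ} {y : Fin N → Fin (Nd (M + 1)) → ℝ}
    (hLO : 0 ≤ LO) (hK : 1 ≤ K)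
    (hLip : ∀ z z' : Pt M N Nd, z ∈ levelSet α β lw lv θ x y →
      z' ∈ levelSet α β lw lv θ x y →
      |Obar lw lv y z - Obar lw lv y z'| ≤ LO * l2dist z z')
    {W : Wt M Nd} (hW : ∀ ℓ, ∑ j, vecNorm (fun i => W ℓ i j) ≤ K) (b : Bs M Nd)
    {s : Us M N Nd} (hs : ∀ n ℓ i, 0 ≤ s n ℓ i) {t t' : ℝ} (ht' : 0 ≤ t') (htt : t' ≤ t)
    (h : Opp α β lw lv y (netPt α x W b (t • s)) ≤ θ)
    (h' : Opp α β lw lv y (netPt α x W b (t' • s)) ≤ θ) :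
    Opp α β lw lv y (netPt α x W b (t' • s))
        + (β - (M + 1) * LO * K ^ (M + 1)) * ((t - t') * total s)
      ≤ Opp α β lw lv y (netPt α x W b (t • s)) := by
  have hmem : ∀ r : ℝ, 0 ≤ r → Opp α β lw lv y (netPt α x W b (r • s)) ≤ θ →
      netPt α x W b (r • s) ∈ levelSet α β lw lv θ x y := fun r hr h =>
    ⟨netPt_feas2 x W b fun n ℓ i => mul_nonneg hr (hs n ℓ i), h⟩
  have h1 := (abs_le.1 (hLip _ _ (hmem t (ht'.trans htt) h) (hmem t' ht' h'))).1
  have h2 := mul_le_mul_of_nonneg_left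
    (l2dist_netPt_le hα0 hα1 hK x b (t • s) (t' • s) hW) hLO
  rw [total_abs_smul_sub hs htt] at h2
  simp only [Opp_eq, slack_netPt, total_smul]
  linarith

/-- A point of `Ω₂` strictly below the level `θ` is dominated by a point of `Ω₁`, strictly so
if its slack is nonzero. -/
lemma exists_feas1_le {α β lw lv θ LO K : ℝ} (hα0 : 0 < α) (hα1 : α < 1) (hβ : 0 < β)
    (hlw : 0 < lw) (hlv : 0 < lv)
    {x : Fin N → Fin (Nd 0) → ℝ} {y : Fin N → Fin (Nd (M + 1)) → ℝ}
    (hLO : 0 ≤ LO) (hK : 1 ≤ K) (hKθ : θ / lw ≤ K)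
    (hLip : ∀ z z' : Pt M N Nd, z ∈ levelSet α β lw lv θ x y →
      z' ∈ levelSet α β lw lv θ x y →
      |Obar lw lv y z - Obar lw lv y z'| ≤ LO * l2dist z z')
    (hbig : (M + 1 : ℝ) * LO * K ^ (M + 1) < β)
    {z : Pt M N Nd} (hz : feas2 α x z) (hzθ : Opp α β lw lv y z < θ) :
    ∃ z', feas1 α x z' ∧ Obar lw lv y z' ≤ Opp α β lw lv y z ∧
      (¬ feas1 α x z → Obar lw lv y z' < Opp α β lw lv y z) := by
  obtain ⟨h0, hl, hc⟩ := hz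
  have hs := slack_nonneg hc
  have hz' := netPt_slack (α := α) h0 hl
  have hW : ∀ ℓ, ∑ j, vecNorm (fun i => z.1 ℓ i j) ≤ K := fun ℓ =>
    (sum_vecNorm_le hlw ((R1_le_Opp hβ hlv y hc).trans hzθ.le) ℓ).trans hKθ
  have hf0 := feas1_iff_slack_eq_zero (α := α) (x := x) (z := z)
  set s := slack α z
  -- `r` is the amount by which the slack has been shrunk, so the path starts at `z`.
  set f : ℝ → ℝ := fun r => Opp α β lw lv y (netPt α x z.1 z.2.1 ((1 - r) • s)) with hf
  have hfc : Continuous f := by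
    refine (continuous_Opp α β lw lv y).comp ((continuous_netPt α x z.1 z.2.1).comp ?_)
    fun_prop
  have hfz : f 0 = Opp α β lw lv y z := by simp only [hf, sub_zero, one_smul, hz']
  have hstep : ∀ r r', r ≤ r' → r' ≤ 1 → f r ≤ θ → f r' ≤ θ →
      f r' + (β - (M + 1) * LO * K ^ (M + 1)) * ((r' - r) * total s) ≤ f r := by
    intro r r' hrr hr' h h'
    have := Opp_path_le hα0 hα1 hLO hK hLip hW z.2.1 hs (t := 1 - r) (t' := 1 - r')
      (by linarith) (by linarith) h h'
    rwa [show (1 - r) - (1 - r') = r' - r by ring] at this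
  have hT := total_nonneg hs
  have hgap : 0 < β - (M + 1) * LO * K ^ (M + 1) := sub_pos.2 hbig
  have hall : Set.Icc (0 : ℝ) 1 ⊆ {r | f r ≤ f 0} := by
    refine IsClosed.Icc_subset_of_forall_exists_gt
      ((isClosed_le hfc continuous_const).inter isClosed_Icc) (le_refl (f 0)) ?_
    rintro r ⟨hr, hr0, hr1⟩ q hq
    have hr : f r ≤ f 0 := hr
    have hrθ : f r < θ := by linarith
    have hev : ∀ᶠ r' in 𝓝[>] r, f r' < θ :=
      (hfc.continuousAt.eventually_lt continuousAt_const hrθ).filter_mono nhdsWithin_le_nhds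
    have hev2 : ∀ᶠ r' in 𝓝[>] r, r' ∈ Set.Ioc r (min q 1) :=
      Ioc_mem_nhdsGT (lt_min hq hr1)
    obtain ⟨r', h1, h2⟩ := (hev.and hev2).exists
    refine ⟨r', ?_, h2.1, h2.2.trans (min_le_left _ _)⟩
    have h3 := hstep r r' h2.1.le (h2.2.trans (min_le_right _ _)) hrθ.le h1.le
    have h4 : 0 ≤ (β - (M + 1) * LO * K ^ (M + 1)) * ((r' - r) * total s) :=
      mul_nonneg hgap.le (mul_nonneg (sub_nonneg.2 h2.1.le) hT)
    change f r' ≤ f 0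
    linarith
  have h1 : f 1 ≤ f 0 := hall (Set.right_mem_Icc.2 zero_le_one)
  have h1' := hstep 0 1 zero_le_one le_rfl (by linarith) (by linarith)
  have hz1 : f 1 = Obar lw lv y (netPt α x z.1 z.2.1 0) := by
    simp only [hf, sub_self, zero_smul, Opp_eq, slack_netPt]
    simp [total]
  refine ⟨netPt α x z.1 z.2.1 0, ?_, by linarith, fun hn => ?_⟩
  · rw [feas1_iff_slack_eq_zero, slack_netPt]
    exact ⟨netPt_inputEq _ _ _ _ _, netPt_linEq _ _ _ _ _, fun _ _ _ => rfl⟩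
  · have hT' : 0 < total s := hT.lt_of_ne' fun h =>
      hn (hf0.2 ⟨h0, hl, eq_zero_of_total_eq_zero hs h⟩)
    have : 0 < (β - (M + 1) * LO * K ^ (M + 1)) * ((1 - 0) * total s) := by
      rw [sub_zero, one_mul]
      exact mul_pos hgap hT'
    linarith

lemma feas1.feas2 {α : ℝ} {x : Fin N → Fin (Nd 0) → ℝ} {z : Pt M N Nd} (h : feas1 α x z) :
    feas2 α x z := by
  rw [feas1_iff_slack_eq_zero] at h
  exact ⟨h.1, h.2.1, inCone_of_slack_nonneg fun n ℓ i => (h.2.2 n ℓ i).ge⟩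

lemma feas1.Opp_eq_Obar {α : ℝ} {x : Fin N → Fin (Nd 0) → ℝ} {z : Pt M N Nd}
    (h : feas1 α x z) (β lw lv : ℝ) (y : Fin N → Fin (Nd (M + 1)) → ℝ) :
    Opp α β lw lv y z = Obar lw lv y z := by
  rw [feas1_iff_slack_eq_zero] at h
  simp [Opp_eq, total, h.2.2]

/-- The zero network is feasible and its objective value is the mean squared norm of the labels. -/
lemma exists_feas1_zero (α lw lv : ℝ) (x : Fin N → Fin (Nd 0) → ℝ)
    (y : Fin N → Fin (Nd (M + 1)) → ℝ) :
    ∃ z : Pt M N Nd, feas1 α x z ∧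
      Obar lw lv y z = (1 / (N : ℝ)) * ∑ n : Fin N, ∑ i : Fin (Nd (M + 1)), (y n i) ^ 2 := by
  have hnet : ∀ n (ℓ : ℕ) (i : Fin (Nd (ℓ + 1))),
      net α (x n) (0 : Wt M Nd) (0 : Bs M Nd) 0 (ℓ + 1) i = 0 := by
    intro n ℓ i
    simp [net, lrelu]
  refine ⟨netPt α x 0 0 0, ?_, ?_⟩
  · rw [feas1_iff_slack_eq_zero, slack_netPt]
    exact ⟨netPt_inputEq _ _ _ _ _, netPt_linEq _ _ _ _ _, fun _ _ _ => rfl⟩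
  · have e1 : ∀ n i, net α (x n) (0 : Wt M Nd) (0 : Bs M Nd) 0
        ((Fin.last (M + 1) : Fin (M + 2)) : ℕ) i = 0 := fun n i => hnet n M i
    have e2 : ∀ n (ℓ : Fin (M + 1)) i, net α (x n) (0 : Wt M Nd) (0 : Bs M Nd) 0
        (ℓ.succ : ℕ) i = 0 := fun n ℓ i => hnet n ℓ.1 i
    simp only [Obar, R1, R2, netPt, Pi.zero_apply, e1, e2]
    simp

/-- exact penalty, global minimizers: if
`β > L·L_Ō·max{θ_w,1}^L` then the global minimizers of `O` over `Ω₂`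
are exactly the global minimizers of `Ō` over `Ω₁`. -/
theorem exact_penalty_global
    (M N : ℕ) (Nd : ℕ → ℕ) (hN : 1 ≤ N) (hNd : ∀ ℓ ≤ M + 1, 1 ≤ Nd ℓ)
    (α β lw lv θ LO : ℝ) (hα0 : 0 < α) (hα1 : α < 1) (hβ : 0 < β)
    (hlw : 0 < lw) (hlv : 0 < lv)
    (x : Fin N → Fin (Nd 0) → ℝ) (y : Fin N → Fin (Nd (M + 1)) → ℝ)
    (hθ : (1 / (N : ℝ)) * ∑ n : Fin N, ∑ i : Fin (Nd (M + 1)), (y n i) ^ 2 < θ)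
    (hLip : ∀ z z' : Pt M N Nd, z ∈ levelSet α β lw lv θ x y →
      z' ∈ levelSet α β lw lv θ x y →
      |Obar lw lv y z - Obar lw lv y z'| ≤ LO * l2dist z z')
    (hbig : (M + 1 : ℝ) * LO * max (thw M Nd θ lw) 1 ^ (M + 1) < β)
    (zs : Pt M N Nd) :
    (feas2 α x zs ∧ ∀ z : Pt M N Nd, feas2 α x z →
        Opp α β lw lv y zs ≤ Opp α β lw lv y z) ↔
    (feas1 α x zs ∧ ∀ z : Pt M N Nd, feas1 α x z →
        Obar lw lv y zs ≤ Obar lw lv y z) := by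
  have hθ0 : 0 < θ := lt_of_le_of_lt (by positivity) hθ
  have hthw : θ / lw ≤ thw M Nd θ lw := by
    refine le_mul_of_one_le_right (div_pos hθ0 hlw).le (Real.one_le_sqrt.2 ?_)
    have h1 : (1 : ℝ) ≤ Nd 0 := by exact_mod_cast hNd 0 (Nat.zero_le _)
    have h2 : (0 : ℝ) ≤ ∑ ℓ : Fin (M + 1), (Nd (ℓ.1 + 1) : ℝ) := by positivity
    linarith
  -- A negative `LO` satisfying `hLip` may be replaced by `0`, since `β > 0`.
  have hbig' : (M + 1 : ℝ) * max LO 0 * max (thw M Nd θ lw) 1 ^ (M + 1) < β := by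
    rcases le_total LO 0 with h | h
    · simpa [max_eq_right h] using hβ
    · rwa [max_eq_left h]
  have hLip' : ∀ z z' : Pt M N Nd, z ∈ levelSet α β lw lv θ x y →
      z' ∈ levelSet α β lw lv θ x y →
      |Obar lw lv y z - Obar lw lv y z'| ≤ max LO 0 * l2dist z z' := fun z z' h h' =>
    (hLip z z' h h').trans (mul_le_mul_of_nonneg_right (le_max_left _ _) (Real.sqrt_nonneg _))
  have key := fun (z : Pt M N Nd) (hz : feas2 α x z) (hzθ : Opp α β lw lv y z < θ) =>
    exists_feas1_le hα0 hα1 hβ hlw hlv (le_max_right LO 0) (le_max_right _ _)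
      (hthw.trans (le_max_left _ _)) hLip' hbig' hz hzθ
  obtain ⟨z0, hz0, hz0y⟩ := exists_feas1_zero (M := M) α lw lv x y
  constructor
  · rintro ⟨hzs, hmin⟩
    have hle : ∀ z, feas1 α x z → Opp α β lw lv y zs ≤ Obar lw lv y z := fun z hz =>
      (hmin z hz.feas2).trans (hz.Opp_eq_Obar β lw lv y).le
    have h1 : feas1 α x zs := by
      by_contra hn
      obtain ⟨z', hz', -, hlt⟩ := key zs hzs (by linarith [hle z0 hz0])
      exact absurd (hlt hn) (hle z' hz').not_gt
    exact ⟨h1, fun z hz => (h1.Opp_eq_Obar β lw lv y).symm.le.trans (hle z hz)⟩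
  · rintro ⟨hzs, hmin⟩
    refine ⟨hzs.feas2, fun z hz => ?_⟩
    rw [hzs.Opp_eq_Obar]
    by_contra! hlt
    obtain ⟨z', hz', hle, -⟩ := key z hz (by linarith [hmin z0 hz0])
    linarith [hmin z' hz']
end
end

section
/- (Multiplier shift construction.) Let m ≥ 1, 0 < α < 1, β > 0, and let u, v ∈ ℝ^m satisfy v_i = max(u_i, α u_i) for all i. Let μ¹, μ² ∈ ℝ^m with μ¹ ≥ 0, μ² ≥ 0, and ξ ∈ ℝ^m satisfy ⟨μ¹, u − v⟩ = 0, ⟨μ², αu − v⟩ = 0, and for each i ∈ [m]: if u_i > 0 then 0 = (μ¹_i − β) + α μ²_i + ξ_i; if u_i < 0 then 0 = μ¹_i + α(μ²_i − β) + ξ_i; and if u_i = 0 then at least one of these two equations holds. Then there exist μ̄¹, μ̄² ∈ ℝ^m such that μ̄¹ + α μ̄² + ξ = 0, μ̄¹ + μ̄² = μ¹ + μ² − β·e (where e is the all-ones vector), ⟨μ̄¹, v − u⟩ = 0, and ⟨μ̄², v − α u⟩ = 0. -/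
/-!
The terms of each complementarity sum all have the same sign, because `v i` is at least `u i` and
`α * u i`; hence complementarity holds in every coordinate. In each coordinate one subtracts `β`
from the multiplier of a branch attaining the maximum `v i`: from `μ1 i` if `0 < u i`, from `μ2 i`
if `u i < 0`, and from the one whose stationarity equation holds if `u i = 0`. The slack of the
shifted branch vanishes, so the shift keeps complementarity.
-/

open Finset

/-- multiplier shift construction. -/
theorem multiplier_shift
    (m : ℕ) (hm : 1 ≤ m) (α β : ℝ) (hα0 : 0 < α) (hα1 : α < 1) (hβ : 0 < β)
    (u v μ1 μ2 ξ : Fin m → ℝ)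
    (hv : ∀ i, v i = max (u i) (α * u i))
    (hμ1 : ∀ i, 0 ≤ μ1 i) (hμ2 : ∀ i, 0 ≤ μ2 i)
    (hc1 : ∑ i, μ1 i * (u i - v i) = 0)
    (hc2 : ∑ i, μ2 i * (α * u i - v i) = 0)
    (hcase : ∀ i, (0 < u i → (μ1 i - β) + α * μ2 i + ξ i = 0) ∧
      (u i < 0 → μ1 i + α * (μ2 i - β) + ξ i = 0) ∧
      (u i = 0 → (μ1 i - β) + α * μ2 i + ξ i = 0 ∨
        μ1 i + α * (μ2 i - β) + ξ i = 0)) :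
    ∃ mb1 mb2 : Fin m → ℝ,
      (∀ i, mb1 i + α * mb2 i + ξ i = 0) ∧
      (∀ i, mb1 i + mb2 i = μ1 i + μ2 i - β) ∧
      (∑ i, mb1 i * (v i - u i) = 0) ∧
      (∑ i, mb2 i * (v i - α * u i) = 0) := by
  have h1 : ∀ i, μ1 i * (u i - v i) = 0 := fun i =>
    (Finset.sum_eq_zero_iff_of_nonpos fun j _ =>
      mul_nonpos_of_nonneg_of_nonpos (hμ1 j)
        (sub_nonpos.2 ((hv j).symm ▸ le_max_left _ _))).1 hc1 i (Finset.mem_univ i)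
  have h2 : ∀ i, μ2 i * (α * u i - v i) = 0 := fun i =>
    (Finset.sum_eq_zero_iff_of_nonpos fun j _ =>
      mul_nonpos_of_nonneg_of_nonpos (hμ2 j)
        (sub_nonpos.2 ((hv j).symm ▸ le_max_right _ _))).1 hc2 i (Finset.mem_univ i)
  have key : ∀ i, ∃ a b : ℝ, a + α * b + ξ i = 0 ∧ a + b = μ1 i + μ2 i - β ∧
      a * (v i - u i) = 0 ∧ b * (v i - α * u i) = 0 := by
    intro i
    have e1 := h1 i
    have e2 := h2 i
    obtain ⟨hpos, hneg, hzero⟩ := hcase i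
    have shift1 (hs : (μ1 i - β) + α * μ2 i + ξ i = 0) (huv : v i = u i) :
        ∃ a b : ℝ, a + α * b + ξ i = 0 ∧ a + b = μ1 i + μ2 i - β ∧
          a * (v i - u i) = 0 ∧ b * (v i - α * u i) = 0 :=
      ⟨μ1 i - β, μ2 i, hs, by ring, by rw [huv]; ring, by linarith⟩
    have shift2 (hs : μ1 i + α * (μ2 i - β) + ξ i = 0) (huv : v i = α * u i) :
        ∃ a b : ℝ, a + α * b + ξ i = 0 ∧ a + b = μ1 i + μ2 i - β ∧
          a * (v i - u i) = 0 ∧ b * (v i - α * u i) = 0 :=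
      ⟨μ1 i, μ2 i - β, hs, by ring, by linarith, by rw [huv]; ring⟩
    rcases lt_trichotomy (u i) 0 with h | h | h
    · exact shift2 (hneg h) ((hv i).trans (max_eq_right (by nlinarith)))
    · have hvi : v i = 0 := by rw [hv i, h]; simp
      rcases hzero h with hs | hs
      · exact shift1 hs (by rw [hvi, h])
      · exact shift2 hs (by rw [hvi, h, mul_zero])
    · exact shift1 (hpos h) ((hv i).trans (max_eq_left (by nlinarith)))
  choose a b hstat hsum ha hb using key
  exact ⟨a, b, hstat, hsum, Finset.sum_eq_zero fun i _ => ha i,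
    Finset.sum_eq_zero fun i _ => hb i⟩
end

section
/- (Sufficient decrease of the alternating minimization step.) Fix ρ > 0, τ₁ > 0, a multiplier ξ with blocks ξ_{n,ℓ} ∈ ℝ^{N_ℓ}, and a point (w,b,v,u) with v_{n,ℓ} ≥ u_{n,ℓ} and v_{n,ℓ} ≥ α u_{n,ℓ} componentwise. Let (w⁺,b⁺) be a global minimizer over all (w',b') of L_ρ(w',b',v,u;ξ). For ℓ = 2,…,L set M_ℓ = [−W⁺_ℓ, I_{N_ℓ}], τ_ℓ = ρ‖M_ℓ‖² + τ₁ (operator norm), S_ℓ = τ_ℓ I − ρ M_ℓᵀ M_ℓ, and define the proximal term P(v',u') = (1/2) Σ_{n=1}^N Σ_{ℓ=2}^L ‖(v'_{n,ℓ−1} − v_{n,ℓ−1}; u'_{n,ℓ} − u_{n,ℓ})‖²_{S_ℓ} + (τ₁/2) Σ_n ‖u'_{n,1} − u_{n,1}‖². Let (v⁺,u⁺) be a global minimizer of L_ρ(w⁺,b⁺,v',u';ξ) + P(v',u') over {(v',u') : v'_{n,ℓ} ≥ u'_{n,ℓ}, v'_{n,ℓ} ≥ α u'_{n,ℓ} componentwise}.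 Then L_ρ(w⁺,b⁺,v⁺,u⁺;ξ) − L_ρ(w,b,v,u;ξ) ≤ −(τ₁/2)‖u⁺ − u‖² − (τ₁/2) Σ_{n=1}^N Σ_{ℓ=1}^{L−1} ‖v⁺_{n,ℓ} − v_{n,ℓ}‖². -/
/-!
The first block update does not increase the augmented Lagrangian, by minimality of `(w⁺, b⁺)`
tested against `(w, b)`. The old point `(v, u)` is feasible for the second subproblem and its
proximal term vanishes there, so minimality of `(v⁺, u⁺)` gives
`L(w⁺, b⁺, v⁺, u⁺) + P(v⁺, u⁺) ≤ L(w⁺, b⁺, v, u)`. It remains to bound `P` from below: since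
`‖M d‖² ≤ ‖M‖² ‖d‖²` (`sum_sq_le_opNorm2_sq`), one has `S_ℓ ≥ τ₁ I`, hence `P(v⁺, u⁺)` is at least
`τ₁ / 2` times the squared displacement (`le_proxP`). No convexity of the Lagrangian is needed.
-/


open Finset Filter Topology

noncomputable section

variable {M N : ℕ} {Nd : ℕ → ℕ}

/-- The ℓ²-operator norm of a matrix. -/
def opNorm2 {p q : Type*} [Fintype p] [Fintype q] [DecidableEq p] [DecidableEq q]
    (A : Matrix p q ℝ) : ℝ :=
  ‖LinearMap.toContinuousLinearMap (Matrix.toEuclideanLin A)‖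

/-- The block matrix `M_ℓ = [-W_{ℓ+2}  I]` (for `ℓ : Fin M`, original layer `ℓ+2`). -/
def bigM (Wp : Wt M Nd) (ℓ : Fin M) :
    Matrix (Fin (Nd (ℓ.1 + 2))) (Fin (Nd (ℓ.1 + 1)) ⊕ Fin (Nd (ℓ.1 + 2))) ℝ :=
  Matrix.of fun i jc =>
    Sum.elim (fun j => -(Wp ℓ.succ i j)) (fun j' => if j' = i then (1 : ℝ) else 0) jc

/-- The proximal term `P(v',u')` built from the matrices
`S_ℓ = τ_ℓ I - ρ M_ℓᵀ M_ℓ`, `τ_ℓ = ρ ‖M_ℓ‖² + τ₁`, so that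
`‖z‖²_{S_ℓ} = τ_ℓ ‖z‖² - ρ ‖M_ℓ z‖²`. -/
def proxP (ρ τ1 : ℝ) (Wp : Wt M Nd) (v : Vs M N Nd) (u : Us M N Nd)
    (v' : Vs M N Nd) (u' : Us M N Nd) : ℝ :=
  (1 / 2) * ∑ n : Fin N, ∑ ℓ : Fin M,
      ((ρ * opNorm2 (bigM Wp ℓ) ^ 2 + τ1) *
          ((∑ j : Fin (Nd (ℓ.1 + 1)),
              (v' n ℓ.succ.castSucc j - v n ℓ.succ.castSucc j) ^ 2)
            + ∑ i : Fin (Nd (ℓ.1 + 2)), (u' n ℓ.succ i - u n ℓ.succ i) ^ 2)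
        - ρ * ∑ i : Fin (Nd (ℓ.1 + 2)),
            ((u' n ℓ.succ i - u n ℓ.succ i)
              - ∑ j : Fin (Nd (ℓ.1 + 1)),
                  Wp ℓ.succ i j * (v' n ℓ.succ.castSucc j - v n ℓ.succ.castSucc j)) ^ 2)
    + (τ1 / 2) * ∑ n : Fin N, ∑ i : Fin (Nd 1),
        (u' n ⟨0, Nat.succ_pos M⟩ i - u n ⟨0, Nat.succ_pos M⟩ i) ^ 2

/-- The bound `‖M_ℓ (a; b)‖² ≤ ‖M_ℓ‖² ‖(a; b)‖²` in coordinates, where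
`M_ℓ (a; b) = b - W_ℓ a`. -/
lemma sum_sq_le_opNorm2_sq (Wp : Wt M Nd) (ℓ : Fin M)
    (a : Fin (Nd (ℓ.1 + 1)) → ℝ) (b : Fin (Nd (ℓ.1 + 2)) → ℝ) :
    ∑ i, (b i - ∑ j : Fin (Nd (ℓ.1 + 1)), Wp ℓ.succ i j * a j) ^ 2
      ≤ opNorm2 (bigM Wp ℓ) ^ 2 * ((∑ j, a j ^ 2) + ∑ i, b i ^ 2) := by
  have h := (LinearMap.toContinuousLinearMap
    (Matrix.toEuclideanLin (bigM Wp ℓ))).le_opNorm (WithLp.toLp 2 (Sum.elim a b))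
  have h2 := pow_le_pow_left₀ (norm_nonneg _) h 2
  rw [mul_pow, EuclideanSpace.real_norm_sq_eq, EuclideanSpace.real_norm_sq_eq] at h2
  simp only [Fintype.sum_sum_type, Sum.elim_inl, Sum.elim_inr] at h2
  refine le_trans (le_of_eq (Finset.sum_congr rfl fun i _ => ?_)) h2
  congr 1
  simp [Matrix.toLpLin_apply, Matrix.mulVec, dotProduct, bigM, Fintype.sum_sum_type]
  ring

/-- The proximal term vanishes at its centre. -/
lemma proxP_self (ρ τ1 : ℝ) (Wp : Wt M Nd) (v : Vs M N Nd) (u : Us M N Nd) :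
    proxP ρ τ1 Wp v u v u = 0 := by
  simp [proxP]

/-- Coercivity of the proximal term: the weights `τ_ℓ` are chosen so that `S_ℓ ≥ τ₁ I`. -/
lemma le_proxP {ρ : ℝ} (hρ : 0 ≤ ρ) (τ1 : ℝ) (Wp : Wt M Nd) (v : Vs M N Nd) (u : Us M N Nd)
    (v' : Vs M N Nd) (u' : Us M N Nd) :
    (τ1 / 2) * (∑ n : Fin N, ∑ ℓ : Fin (M + 1), ∑ i : Fin (Nd (ℓ.1 + 1)),
        (u' n ℓ i - u n ℓ i) ^ 2)
      + (τ1 / 2) * ∑ n : Fin N, ∑ ℓ : Fin M, ∑ j : Fin (Nd (ℓ.1 + 1)),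
          (v' n ℓ.succ.castSucc j - v n ℓ.succ.castSucc j) ^ 2
      ≤ proxP ρ τ1 Wp v u v' u' := by
  -- The layer `ℓ = 0` of `u` is not coupled to any free `v`, so it is split off first.
  have hsplit : ∑ n : Fin N, ∑ ℓ : Fin (M + 1), ∑ i : Fin (Nd (ℓ.1 + 1)),
        (u' n ℓ i - u n ℓ i) ^ 2
      = (∑ n : Fin N, ∑ i : Fin (Nd 1),
          (u' n ⟨0, Nat.succ_pos M⟩ i - u n ⟨0, Nat.succ_pos M⟩ i) ^ 2)
        + ∑ n : Fin N, ∑ ℓ : Fin M, ∑ i : Fin (Nd (ℓ.1 + 2)),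
            (u' n ℓ.succ i - u n ℓ.succ i) ^ 2 := by
    rw [← Finset.sum_add_distrib]
    refine Finset.sum_congr rfl fun n _ => ?_
    rw [Fin.sum_univ_succ]
    rfl
  have hmain : τ1 * ((∑ n : Fin N, ∑ ℓ : Fin M, ∑ j : Fin (Nd (ℓ.1 + 1)),
          (v' n ℓ.succ.castSucc j - v n ℓ.succ.castSucc j) ^ 2)
        + ∑ n : Fin N, ∑ ℓ : Fin M, ∑ i : Fin (Nd (ℓ.1 + 2)),
            (u' n ℓ.succ i - u n ℓ.succ i) ^ 2)
      ≤ ∑ n : Fin N, ∑ ℓ : Fin M,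
      ((ρ * opNorm2 (bigM Wp ℓ) ^ 2 + τ1) *
          ((∑ j : Fin (Nd (ℓ.1 + 1)),
              (v' n ℓ.succ.castSucc j - v n ℓ.succ.castSucc j) ^ 2)
            + ∑ i : Fin (Nd (ℓ.1 + 2)), (u' n ℓ.succ i - u n ℓ.succ i) ^ 2)
        - ρ * ∑ i : Fin (Nd (ℓ.1 + 2)),
            ((u' n ℓ.succ i - u n ℓ.succ i)
              - ∑ j : Fin (Nd (ℓ.1 + 1)),
                  Wp ℓ.succ i j * (v' n ℓ.succ.castSucc j - v n ℓ.succ.castSucc j)) ^ 2) := by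
    simp only [← Finset.sum_add_distrib]
    rw [Finset.mul_sum]
    refine Finset.sum_le_sum fun n _ => ?_
    rw [Finset.mul_sum]
    refine Finset.sum_le_sum fun ℓ _ => ?_
    have h := mul_le_mul_of_nonneg_left (sum_sq_le_opNorm2_sq Wp ℓ
      (fun j => v' n ℓ.succ.castSucc j - v n ℓ.succ.castSucc j)
      (fun i => u' n ℓ.succ i - u n ℓ.succ i)) hρ
    linarith
  unfold proxP
  rw [hsplit]
  linarith

/-- sufficient decrease of one alternating minimization step. -/
theorem alternating_minimization_sufficient_decrease
    (M N : ℕ) (Nd : ℕ → ℕ) (hN : 1 ≤ N) (hNd : ∀ ℓ ≤ M + 1, 1 ≤ Nd ℓ)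
    (α β lw lv : ℝ) (hα0 : 0 < α) (hα1 : α < 1) (hβ : 0 < β)
    (hlw : 0 < lw) (hlv : 0 < lv)
    (x : Fin N → Fin (Nd 0) → ℝ) (y : Fin N → Fin (Nd (M + 1)) → ℝ)
    (ρ τ1 : ℝ) (hρ : 0 < ρ) (hτ1 : 0 < τ1) (ξ : Us M N Nd)
    (z : Pt M N Nd) (hzc : inCone α z) (hzx : inputEq x z)
    (Wp : Wt M Nd) (bp : Bs M Nd)
    (hWb : ∀ (W' : Wt M Nd) (b' : Bs M Nd),
      ALag α β lw lv y ρ ξ (Wp, bp, z.2.2.1, z.2.2.2)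
        ≤ ALag α β lw lv y ρ ξ (W', b', z.2.2.1, z.2.2.2))
    (vp : Vs M N Nd) (up : Us M N Nd)
    (hpc : inCone α (Wp, bp, vp, up)) (hpx : inputEq x (Wp, bp, vp, up))
    (hvu : ∀ (v' : Vs M N Nd) (u' : Us M N Nd),
      inCone α (Wp, bp, v', u') → inputEq x (Wp, bp, v', u') →
      ALag α β lw lv y ρ ξ (Wp, bp, vp, up) + proxP ρ τ1 Wp z.2.2.1 z.2.2.2 vp up
        ≤ ALag α β lw lv y ρ ξ (Wp, bp, v', u') + proxP ρ τ1 Wp z.2.2.1 z.2.2.2 v' u') :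
    ALag α β lw lv y ρ ξ (Wp, bp, vp, up) - ALag α β lw lv y ρ ξ z
      ≤ -(τ1 / 2) * (∑ n : Fin N, ∑ ℓ : Fin (M + 1), ∑ i : Fin (Nd (ℓ.1 + 1)),
            (up n ℓ i - z.2.2.2 n ℓ i) ^ 2)
        - (τ1 / 2) * ∑ n : Fin N, ∑ ℓ : Fin M, ∑ j : Fin (Nd (ℓ.1 + 1)),
            (vp n ℓ.succ.castSucc j - z.2.2.1 n ℓ.succ.castSucc j) ^ 2 := by
  have h1 := hWb z.1 z.2.1
  have h2 := hvu z.2.2.1 z.2.2.2 hzc hzx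
  rw [proxP_self] at h2
  have h3 := le_proxP hρ.le τ1 Wp z.2.2.1 z.2.2.2 vp up
  have h4 : ALag α β lw lv y ρ ξ (z.1, z.2.1, z.2.2.1, z.2.2.2) = ALag α β lw lv y ρ ξ z := rfl
  linarith
end
end
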